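/- arXiv:2408.14011 — 2 statements merged into one kernel-verified Lean document; each statement's English description precedes it below -/
import Mathlib

section
/- Let N > 3 and let Ψ be a unit vector in ℂ^{d₁} ⊗ ⋯ ⊗ ℂ^{d_N} (represented as Ψ : (∀ i : Fin N, Fin dᵢ) → ℂ with ∑_x |Ψ(x)|² = 1). Then V(Ψ) > 0 if and only if Ψ is genuinely multipartite entangled, i.e. for every nonempty proper subset S of Fin N there exist no vectors u (on the subsystems in S) and v (on the subsystems in Sᶜ) with Ψ(x) = u(x_S)·v(x_{Sᶜ}) for all x; equivalently, V(Ψ) > 0 if and only if C_{S|Sᶜ}(Ψ) > 0 for every nonempty proper subset S of Fin N. -/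
open scoped BigOperators

/-- The reduced density matrix on the first factor of a bipartite pure state:
`ρ₁ i i' = ∑ j, ψ (i, j) * conj (ψ (i', j))`. -/
noncomputable def redMat {α β : Type*} [Fintype β] (ψ : α × β → ℂ) : Matrix α α ℂ :=
  Matrix.of fun i i' => ∑ j, ψ (i, j) * (starRingEnd ℂ) (ψ (i', j))

/-- The concurrence `C(ψ) = √(2(1 − Tr(ρ₁²)))` of a bipartite pure state. -/
noncomputable def conc {α β : Type*} [Fintype α] [Fintype β] (ψ : α × β → ℂ) : ℝ :=
  Real.sqrt (2 * (1 - (Matrix.trace (redMat ψ * redMat ψ)).re))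

/-- The bipartition concurrence `C_{S|Sᶜ}(Ψ)` of an `N`-partite pure state with respect to
the bipartition of the parties into `S` and its complement. -/
noncomputable def concS {N : ℕ} {d : Fin N → ℕ} (Ψ : (∀ i, Fin (d i)) → ℂ)
    (S : Finset (Fin N)) : ℝ :=
  conc fun p : ((i : {i : Fin N // i ∈ S}) → Fin (d i)) ×
      ((i : {i : Fin N // i ∉ S}) → Fin (d i)) =>
    Ψ fun i => if h : i ∈ S then p.1 ⟨i, h⟩ else p.2 ⟨i, h⟩

/-- The geometric mean `a` of the `N` one-vs-rest bipartition concurrences. -/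
noncomputable def geoA {N : ℕ} {d : Fin N → ℕ} (Ψ : (∀ i, Fin (d i)) → ℂ) : ℝ :=
  (∏ i : Fin N, concS Ψ {i}) ^ ((1 : ℝ) / N)

/-- The geometric mean `h` of the `2^{N-1} - N - 1` bipartition concurrences `C_{S|Sᶜ}`
with `2 ≤ |S| ≤ ⌊N/2⌋`, each unordered bipartition counted exactly once (for `|S| = N/2`
the representative containing the party `0` is taken). -/
noncomputable def geoH {N : ℕ} [NeZero N] {d : Fin N → ℕ} (Ψ : (∀ i, Fin (d i)) → ℂ) : ℝ :=
  (∏ S ∈ Finset.univ.filter (fun S : Finset (Fin N) =>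
      2 ≤ S.card ∧ (2 * S.card < N ∨ (2 * S.card = N ∧ (0 : Fin N) ∈ S))), concS Ψ S)
    ^ ((1 : ℝ) / (2 ^ (N - 1) - N - 1 : ℕ))

/-- The concurrence regular polygonal pyramid measure `V(Ψ) = (N·a²/12)·cot(π/N)·h`. -/
noncomputable def Vpyr {N : ℕ} [NeZero N] {d : Fin N → ℕ} (Ψ : (∀ i, Fin (d i)) → ℂ) : ℝ :=
  ((N : ℝ) * (geoA Ψ) ^ 2 / 12) * Real.cot (Real.pi / N) * geoH Ψ

theorem conc_nonneg' {α β : Type*} [Fintype α] [Fintype β] (ψ : α × β → ℂ) : 0 ≤ conc ψ :=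
  Real.sqrt_nonneg _

theorem minors_sum {α β : Type*} [Fintype α] [Fintype β] (ψ : α × β → ℂ)
    (h : ∑ p, Complex.normSq (ψ p) = 1) :
    2 * (1 - (Matrix.trace (redMat ψ * redMat ψ)).re) =
      ∑ i, ∑ i', ∑ j, ∑ j',
        Complex.normSq (ψ (i, j) * ψ (i', j') - ψ (i, j') * ψ (i', j)) := by
  have h' : ∑ i, ∑ j, Complex.normSq (ψ (i, j)) = 1 := by
    rw [← h, Fintype.sum_prod_type]
  have e1 : ∑ i, ∑ i', ∑ j, ∑ j',
      Complex.normSq (ψ (i, j)) * Complex.normSq (ψ (i', j')) = 1 := by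
    calc _ = (∑ i, ∑ j, Complex.normSq (ψ (i, j))) *
        (∑ i, ∑ j, Complex.normSq (ψ (i, j))) := by
          simp only [Finset.sum_mul_sum]
      _ = 1 := by rw [h']; norm_num
  have e2 : ∑ i, ∑ i', ∑ j, ∑ j',
      Complex.normSq (ψ (i, j')) * Complex.normSq (ψ (i', j)) = 1 := by
    rw [← e1]
    refine Finset.sum_congr rfl fun i _ => Finset.sum_congr rfl fun i' _ => ?_
    rw [Finset.sum_comm]
  have e3 : (Matrix.trace (redMat ψ * redMat ψ)).re = ∑ i, ∑ i', ∑ j, ∑ j',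
      ((ψ (i, j) * ψ (i', j')) * (starRingEnd ℂ) (ψ (i, j') * ψ (i', j))).re := by
    simp only [Matrix.trace, Matrix.diag_apply, Matrix.mul_apply, redMat, Matrix.of_apply,
      Finset.sum_mul_sum, Complex.re_sum]
    refine Finset.sum_congr rfl fun i _ => Finset.sum_congr rfl fun i' _ =>
      Finset.sum_congr rfl fun j _ => Finset.sum_congr rfl fun j' _ => ?_
    congr 1
    rw [map_mul]; ring
  simp only [Complex.normSq_sub, Complex.normSq_mul, Finset.sum_sub_distrib,
    Finset.sum_add_distrib, ← Finset.mul_sum]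
  rw [e3]
  simp only [Finset.sum_sub_distrib, Finset.sum_add_distrib, ← Finset.mul_sum] at *
  linarith

theorem conc_eq_zero_iff {α β : Type*} [Fintype α] [Fintype β] (ψ : α × β → ℂ)
    (h : ∑ p, Complex.normSq (ψ p) = 1) :
    conc ψ = 0 ↔ ∀ i i' j j', ψ (i, j) * ψ (i', j') = ψ (i, j') * ψ (i', j) := by
  have nn := fun i i' j j' =>
    Complex.normSq_nonneg (ψ (i, j) * ψ (i', j') - ψ (i, j') * ψ (i', j))
  unfold conc
  rw [minors_sum ψ h, Real.sqrt_eq_zero (by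
    exact Finset.sum_nonneg fun i _ => Finset.sum_nonneg fun i' _ => Finset.sum_nonneg fun j _ =>
      Finset.sum_nonneg fun j' _ => nn i i' j j')]
  constructor
  · intro h0 i i' j j'
    have h1 := (Finset.sum_eq_zero_iff_of_nonneg (fun i _ => Finset.sum_nonneg fun i' _ =>
      Finset.sum_nonneg fun j _ => Finset.sum_nonneg fun j' _ => nn i i' j j')).1 h0 i
        (Finset.mem_univ _)
    have h2 := (Finset.sum_eq_zero_iff_of_nonneg (fun i' _ =>
      Finset.sum_nonneg fun j _ => Finset.sum_nonneg fun j' _ => nn i i' j j')).1 h1 i'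
        (Finset.mem_univ _)
    have h3 := (Finset.sum_eq_zero_iff_of_nonneg (fun j _ =>
      Finset.sum_nonneg fun j' _ => nn i i' j j')).1 h2 j (Finset.mem_univ _)
    have h4 := (Finset.sum_eq_zero_iff_of_nonneg (fun j' _ => nn i i' j j')).1 h3 j'
      (Finset.mem_univ _)
    exact sub_eq_zero.1 (Complex.normSq_eq_zero.1 h4)
  · intro h0
    simp [h0]

def mixS {N : ℕ} {d : Fin N → ℕ} (S : Finset (Fin N)) (x y : ∀ i, Fin (d i)) :
    ∀ i, Fin (d i) := fun i => if i ∈ S then x i else y i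

theorem concS_eq_zero_iff {N : ℕ} {d : Fin N → ℕ} (Ψ : (∀ i, Fin (d i)) → ℂ)
    (hΨ : ∑ x : ∀ i, Fin (d i), Complex.normSq (Ψ x) = 1) (S : Finset (Fin N)) :
    concS Ψ S = 0 ↔ ∀ x y, Ψ x * Ψ y = Ψ (mixS S x y) * Ψ (mixS S y x) := by
  unfold concS
  rw [conc_eq_zero_iff]
  · constructor
    · intro h x y
      have := h (fun i => x i) (fun i => y i) (fun i => x i) (fun i => y i)
      simp only [dite_eq_ite, ite_self] at this
      exact this
    · intro h i i' j j'
      have := h (fun k => if h : k ∈ S then i ⟨k, h⟩ else j ⟨k, h⟩)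
        (fun k => if h : k ∈ S then i' ⟨k, h⟩ else j' ⟨k, h⟩)
      convert this using 3 <;>
      · funext k
        by_cases hk : k ∈ S <;> simp [mixS, hk]
  · rw [← hΨ]
    refine (Equiv.sum_comp (Equiv.piEquivPiSubtypeProd (fun i => i ∈ S)
      (fun i => Fin (d i))).symm (fun x => Complex.normSq (Ψ x)))

theorem concS_zero_compl {N : ℕ} {d : Fin N → ℕ} (Ψ : (∀ i, Fin (d i)) → ℂ)
    (hΨ : ∑ x : ∀ i, Fin (d i), Complex.normSq (Ψ x) = 1) (S : Finset (Fin N)) :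
    concS Ψ Sᶜ = 0 ↔ concS Ψ S = 0 := by
  have key : ∀ x y : ∀ i, Fin (d i), mixS Sᶜ x y = mixS S y x := by
    intro x y
    funext k
    by_cases hk : k ∈ S <;> simp [mixS, hk]
  rw [concS_eq_zero_iff Ψ hΨ, concS_eq_zero_iff Ψ hΨ]
  simp only [key]
  exact forall₂_congr fun x y => by rw [mul_comm (Ψ (mixS S y x))]

theorem concS_zero_iff_prod {N : ℕ} {d : Fin N → ℕ} (Ψ : (∀ i, Fin (d i)) → ℂ)
    (hΨ : ∑ x : ∀ i, Fin (d i), Complex.normSq (Ψ x) = 1) (S : Finset (Fin N)) :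
    concS Ψ S = 0 ↔ ∃ (u : ((i : {i : Fin N // i ∈ S}) → Fin (d i)) → ℂ)
          (v : ((i : {i : Fin N // i ∉ S}) → Fin (d i)) → ℂ),
          ∀ x : ∀ i, Fin (d i),
            Ψ x = u (fun i => x i) * v (fun i => x i) := by
  rw [concS_eq_zero_iff Ψ hΨ]
  constructor
  · intro h
    obtain ⟨z, hz⟩ : ∃ z, Ψ z ≠ 0 := by
      by_contra! hc
      simp [hc] at hΨ
    refine ⟨fun s => Ψ (fun k => if h : k ∈ S then s ⟨k, h⟩ else z k),
      fun t => Ψ (fun k => if h : k ∈ S then z k else t ⟨k, h⟩) / Ψ z, fun x => ?_⟩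
    have h1 := h x z
    have e1 : (fun k => if _h : k ∈ S then x k else z k) = mixS S x z := by
      funext k; simp [mixS]
    have e2 : (fun k => if _h : k ∈ S then z k else x k) = mixS S z x := by
      funext k; simp [mixS]
    simp only [e1, e2]
    field_simp
    exact h1
  · rintro ⟨u, v, h⟩ x y
    have a1 : ∀ x y : ∀ i, Fin (d i), (fun i : {i : Fin N // i ∈ S} => mixS S x y i) =
        fun i : {i : Fin N // i ∈ S} => x i := by
      intro x y; funext k; simp [mixS, k.2]
    have a2 : ∀ x y : ∀ i, Fin (d i), (fun i : {i : Fin N // i ∉ S} => mixS S x y i) =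
        fun i : {i : Fin N // i ∉ S} => y i := by
      intro x y; funext k; simp [mixS, k.2]
    rw [h x, h y, h (mixS S x y), h (mixS S y x), a1, a1, a2, a2]
    ring

theorem rpow_pos_iff' {b e : ℝ} (hb : 0 ≤ b) (he : e ≠ 0) : 0 < b ^ e ↔ 0 < b := by
  constructor
  · intro h
    rcases hb.lt_or_eq with h1 | h1
    · exact h1
    · rw [← h1, Real.zero_rpow he] at h
      exact absurd h (lt_irrefl _)
  · exact fun h => Real.rpow_pos_of_pos h _

theorem prod_pos_iff' {ι : Type*} (s : Finset ι) (f : ι → ℝ) (hf : ∀ i, 0 ≤ f i) :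
    0 < ∏ i ∈ s, f i ↔ ∀ i ∈ s, 0 < f i :=
  ⟨fun h i hi => lt_of_le_of_ne (hf i) (Ne.symm (Finset.prod_ne_zero_iff.1 h.ne' i hi)),
    fun h => Finset.prod_pos h⟩

theorem two_pow_aux (N : ℕ) (hN : 3 < N) : N + 1 < 2 ^ (N - 1) := by
  induction N, hN using Nat.le_induction with
  | base => norm_num
  | succ n hn ih =>
    obtain ⟨m, rfl⟩ : ∃ m, n = m + 1 := ⟨n - 1, by omega⟩
    simp only [Nat.add_sub_cancel] at *
    rw [pow_succ]; omega

theorem Vpyr_pos_iff_all {N : ℕ} [NeZero N] (hN : 3 < N) {d : Fin N → ℕ}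
    (Ψ : (∀ i, Fin (d i)) → ℂ)
    (hΨ : ∑ x : ∀ i, Fin (d i), Complex.normSq (Ψ x) = 1) :
    0 < Vpyr Ψ ↔ ∀ S : Finset (Fin N), S.Nonempty → S ≠ Finset.univ → 0 < concS Ψ S := by
  have nn : ∀ S, 0 ≤ concS Ψ S := fun S => conc_nonneg' _
  have hN0 : (0 : ℝ) < N := by exact_mod_cast (by omega : 0 < N)
  have hcot : 0 < Real.cot (Real.pi / N) := by
    rw [Real.cot_eq_cos_div_sin]
    have hp := Real.pi_pos
    have h4 : (4 : ℝ) ≤ N := by exact_mod_cast hN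
    have h1 : 0 < Real.pi / N := by positivity
    have h2 : Real.pi / N < Real.pi / 2 := by
      apply div_lt_div_of_pos_left hp <;> linarith
    exact div_pos (Real.cos_pos_of_mem_Ioo ⟨by linarith, h2⟩)
      (Real.sin_pos_of_pos_of_lt_pi h1 (by linarith))
  have hA0 : 0 ≤ geoA Ψ := Real.rpow_nonneg (Finset.prod_nonneg fun i _ => nn _) _
  have hH0 : 0 ≤ geoH Ψ := Real.rpow_nonneg (Finset.prod_nonneg fun i _ => nn _) _
  have hA : 0 < geoA Ψ ↔ ∀ i, 0 < concS Ψ {i} := by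
    unfold geoA
    rw [rpow_pos_iff' (Finset.prod_nonneg fun i _ => nn _) (by positivity),
      prod_pos_iff' _ _ (fun i => nn _)]
    simp
  have hH : 0 < geoH Ψ ↔ ∀ S : Finset (Fin N), (2 ≤ S.card ∧
      (2 * S.card < N ∨ (2 * S.card = N ∧ (0 : Fin N) ∈ S))) → 0 < concS Ψ S := by
    have := two_pow_aux N hN
    have h1 : 0 < 2 ^ (N - 1) - N - 1 := by omega
    have h2 : (0 : ℝ) < (2 ^ (N - 1) - N - 1 : ℕ) := by exact_mod_cast h1
    unfold geoH
    rw [rpow_pos_iff' (Finset.prod_nonneg fun i _ => nn _) (one_div_pos.2 h2).ne',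
      prod_pos_iff' _ _ nn]
    simp only [Finset.mem_filter, Finset.mem_univ, true_and]
  have hV : 0 < Vpyr Ψ ↔ 0 < geoA Ψ ∧ 0 < geoH Ψ := by
    unfold Vpyr
    constructor
    · intro h
      refine ⟨hA0.lt_of_ne' ?_, hH0.lt_of_ne' ?_⟩
      · intro h0; simp [h0] at h
      · intro h0; simp [h0] at h
    · rintro ⟨h1, h2⟩
      positivity
  rw [hV, hA, hH]
  constructor
  · rintro ⟨h1, h2⟩ S hS hS'
    have good : ∀ T : Finset (Fin N), T.Nonempty →
        (2 * T.card < N ∨ (2 * T.card = N ∧ (0 : Fin N) ∈ T)) → 0 < concS Ψ T := by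
      intro T hT hc
      have := hT.card_pos
      by_cases h : T.card = 1
      · obtain ⟨i, rfl⟩ := Finset.card_eq_one.1 h
        exact h1 i
      · exact h2 T ⟨by omega, hc⟩
    by_cases hc : 2 * S.card < N ∨ (2 * S.card = N ∧ (0 : Fin N) ∈ S)
    · exact good S hS hc
    · have hcc : Sᶜ.card = N - S.card := by simp [Finset.card_compl]
      have hle : S.card ≤ N := by simpa using Finset.card_le_univ S
      have hne : Sᶜ.Nonempty := by
        rw [Finset.nonempty_iff_ne_empty]
        intro h; exact hS' (by simpa using h)
      have hp := good Sᶜ hne (by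
        rw [hcc, Finset.mem_compl]
        by_cases h0 : (0 : Fin N) ∈ S
        · simp only [h0, and_true] at hc; left; omega
        · simp only [h0, and_false, or_false, not_false_eq_true, and_true] at hc ⊢; omega)
      exact (nn S).lt_of_ne' fun h => hp.ne' ((concS_zero_compl Ψ hΨ S).2 h)
  · intro h
    have hu : ∀ S : Finset (Fin N), S.card < N → S ≠ Finset.univ := by
      rintro S hS rfl
      simp at hS
    refine ⟨fun i => h _ (Finset.singleton_nonempty i) (hu _ (by simp; omega)), ?_⟩
    rintro S ⟨h2, hc⟩
    exact h S (Finset.card_pos.1 (by omega)) (hu _ (by omega))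

/-- For `N > 3`, the concurrence regular polygonal pyramid measure of a unit vector is
positive iff the state is genuinely multipartite entangled (not a product across any
bipartition `S|Sᶜ`), equivalently iff all bipartition concurrences are positive. -/
theorem Vpyr_pos_iff_GME {N : ℕ} [NeZero N] (hN : 3 < N) {d : Fin N → ℕ}
    (Ψ : (∀ i, Fin (d i)) → ℂ)
    (hΨ : ∑ x : ∀ i, Fin (d i), Complex.normSq (Ψ x) = 1) :
    (0 < Vpyr Ψ ↔
      ¬ ∃ S : Finset (Fin N), S.Nonempty ∧ S ≠ Finset.univ ∧
        ∃ (u : ((i : {i : Fin N // i ∈ S}) → Fin (d i)) → ℂ)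
          (v : ((i : {i : Fin N // i ∉ S}) → Fin (d i)) → ℂ),
          ∀ x : ∀ i, Fin (d i),
            Ψ x = u (fun i => x i) * v (fun i => x i)) ∧
    (0 < Vpyr Ψ ↔
      ∀ S : Finset (Fin N), S.Nonempty → S ≠ Finset.univ → 0 < concS Ψ S) := by
  have hall := Vpyr_pos_iff_all hN Ψ hΨ
  refine ⟨?_, hall⟩
  rw [hall]
  constructor
  · rintro h ⟨S, h1, h2, h3⟩
    exact (h S h1 h2).ne' ((concS_zero_iff_prod Ψ hΨ S).2 h3)
  · intro h S h1 h2
    refine lt_of_le_of_ne (conc_nonneg' _) (Ne.symm fun h0 => h ⟨S, h1, h2, ?_⟩)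
    exact (concS_zero_iff_prod Ψ hΨ S).1 h0
end

section
/- Let ψ be a unit vector in ℂ^{d₁} ⊗ ℂ^{d₂} ⊗ ℂ^{d₃}. Then V₁₂₃(ψ) = (√3/12)·(C_{1|23}(ψ)·C_{2|13}(ψ)·C_{3|12}(ψ))^{2/3} > 0 if and only if ψ is genuinely tripartite entangled, i.e. ψ cannot be written as a product u ⊗ v across any of the three bipartitions 1|23, 2|13, 3|12. -/
open scoped BigOperators

section Tripartite

variable {d₁ d₂ d₃ : ℕ}

/-- Bipartition concurrence `C_{1|23}`. -/
noncomputable def T1 (ψ : Fin d₁ × Fin d₂ × Fin d₃ → ℂ) : ℝ :=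
  conc fun p : Fin d₁ × (Fin d₂ × Fin d₃) => ψ (p.1, p.2)

/-- Bipartition concurrence `C_{2|13}`. -/
noncomputable def T2 (ψ : Fin d₁ × Fin d₂ × Fin d₃ → ℂ) : ℝ :=
  conc fun p : Fin d₂ × (Fin d₁ × Fin d₃) => ψ (p.2.1, p.1, p.2.2)

/-- Bipartition concurrence `C_{3|12}`. -/
noncomputable def T3 (ψ : Fin d₁ × Fin d₂ × Fin d₃ → ℂ) : ℝ :=
  conc fun p : Fin d₃ × (Fin d₁ × Fin d₂) => ψ (p.2.1, p.2.2, p.1)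

/-- The tripartite concurrence regular tetrahedron measure
`V₁₂₃(ψ) = (√3/12)·(C_{1|23}·C_{2|13}·C_{3|12})^{2/3}`. -/
noncomputable def V123 (ψ : Fin d₁ × Fin d₂ × Fin d₃ → ℂ) : ℝ :=
  (Real.sqrt 3 / 12) * (T1 ψ * T2 ψ * T3 ψ) ^ ((2 : ℝ) / 3)

end Tripartite

theorem conc_arg_eq {α β : Type*} [Fintype α] [Fintype β] (ψ : α × β → ℂ)
    (h : ∑ x, Complex.normSq (ψ x) = 1) :
    2 * (1 - (Matrix.trace (redMat ψ * redMat ψ)).re) =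
      ∑ i, ∑ i', ∑ j, ∑ j',
        Complex.normSq (ψ (i, j) * ψ (i', j') - ψ (i', j) * ψ (i, j')) := by
  have hT : (Matrix.trace (redMat ψ * redMat ψ)).re = ∑ i, ∑ i', ∑ j, ∑ j',
      ((ψ (i, j) * ψ (i', j')) * (starRingEnd ℂ) (ψ (i', j) * ψ (i, j'))).re := by
    simp only [Matrix.trace, Matrix.diag, Matrix.mul_apply, redMat, Matrix.of_apply,
      Finset.sum_mul_sum, Complex.re_sum]
    refine Finset.sum_congr rfl fun i _ => Finset.sum_congr rfl fun i' _ =>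
      Finset.sum_congr rfl fun j _ => Finset.sum_congr rfl fun j' _ => ?_
    congr 1
    rw [map_mul]
    ring
  rw [Fintype.sum_prod_type] at h
  have hA : ∑ i, ∑ i', ∑ j, ∑ j',
      Complex.normSq (ψ (i, j)) * Complex.normSq (ψ (i', j')) = 1 := by
    simp only [← Finset.sum_mul_sum]
    rw [h, one_mul]
  have hB : ∑ i, ∑ i', ∑ j, ∑ j',
      Complex.normSq (ψ (i', j)) * Complex.normSq (ψ (i, j')) = 1 := by
    rw [Finset.sum_comm]
    exact hA
  simp only [Complex.normSq_sub, Complex.normSq_mul, Finset.sum_add_distrib,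
    Finset.sum_sub_distrib, ← Finset.mul_sum]
  simp only [← Finset.mul_sum] at hA hB
  rw [hT, hA, hB]
  ring

theorem conc_pos_iff {α β : Type*} [Fintype α] [Fintype β] (ψ : α × β → ℂ)
    (h : ∑ x, Complex.normSq (ψ x) = 1) :
    0 < conc ψ ↔ ¬ ∃ (u : α → ℂ) (v : β → ℂ), ∀ i j, ψ (i, j) = u i * v j := by
  rw [conc, Real.sqrt_pos, conc_arg_eq ψ h]
  constructor
  · rintro hp ⟨u, v, huv⟩
    refine hp.ne' ?_
    refine Finset.sum_eq_zero fun i _ => Finset.sum_eq_zero fun i' _ =>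
      Finset.sum_eq_zero fun j _ => Finset.sum_eq_zero fun j' _ => ?_
    rw [Complex.normSq_eq_zero]
    simp only [huv]
    ring
  · intro hn
    by_contra hp
    apply hn
    have n0 : ∀ z : ℂ, 0 ≤ Complex.normSq z := Complex.normSq_nonneg
    have hz := le_antisymm (not_lt.mp hp) (by
      repeat refine Finset.sum_nonneg fun _ _ => ?_
      exact n0 _)
    have hm : ∀ i i' j j', ψ (i, j) * ψ (i', j') = ψ (i', j) * ψ (i, j') := by
      intro i i' j j'
      have h1 := (Finset.sum_eq_zero_iff_of_nonneg (fun i _ => by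
        repeat refine Finset.sum_nonneg fun _ _ => ?_
        exact n0 _)).1 hz i
        (Finset.mem_univ _)
      have h2 := (Finset.sum_eq_zero_iff_of_nonneg (fun i _ => by
        repeat refine Finset.sum_nonneg fun _ _ => ?_
        exact n0 _)).1 h1 i'
        (Finset.mem_univ _)
      have h3 := (Finset.sum_eq_zero_iff_of_nonneg (fun i _ => by
        repeat refine Finset.sum_nonneg fun _ _ => ?_
        exact n0 _)).1 h2 j
        (Finset.mem_univ _)
      have h4 := (Finset.sum_eq_zero_iff_of_nonneg (fun i _ => n0 _)).1 h3 j'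
        (Finset.mem_univ _)
      exact sub_eq_zero.1 (Complex.normSq_eq_zero.1 h4)
    obtain ⟨⟨i0, j0⟩, h0⟩ : ∃ x, ψ x ≠ 0 := by
      by_contra hc
      push Not at hc
      simp [hc] at h
    refine ⟨fun i => ψ (i, j0), fun j => ψ (i0, j) / ψ (i0, j0), fun i j => ?_⟩
    have := hm i i0 j j0
    field_simp
    rw [this]
    ring

/-- `V₁₂₃(ψ) > 0` iff `ψ` is genuinely tripartite entangled, i.e. `ψ` is not a product
across any of the three bipartitions `1|23, 2|13, 3|12`. -/
theorem V123_pos_iff_GME {d₁ d₂ d₃ : ℕ}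
    (ψ : Fin d₁ × Fin d₂ × Fin d₃ → ℂ)
    (hψ : ∑ x : Fin d₁ × Fin d₂ × Fin d₃, Complex.normSq (ψ x) = 1) :
    0 < V123 ψ ↔
      (¬ ∃ (u : Fin d₁ → ℂ) (v : Fin d₂ × Fin d₃ → ℂ),
          ∀ x : Fin d₁ × Fin d₂ × Fin d₃, ψ x = u x.1 * v x.2) ∧
      (¬ ∃ (u : Fin d₂ → ℂ) (v : Fin d₁ × Fin d₃ → ℂ),
          ∀ x : Fin d₁ × Fin d₂ × Fin d₃, ψ x = u x.2.1 * v (x.1, x.2.2)) ∧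
      (¬ ∃ (u : Fin d₃ → ℂ) (v : Fin d₁ × Fin d₂ → ℂ),
          ∀ x : Fin d₁ × Fin d₂ × Fin d₃, ψ x = u x.2.2 * v (x.1, x.2.1)) := by
  have h1 : 0 < T1 ψ ↔ _ := conc_pos_iff _ (by exact hψ)
  have h2 : 0 < T2 ψ ↔ _ := conc_pos_iff _ (by
    simp only [Fintype.sum_prod_type] at hψ ⊢
    rw [Finset.sum_comm]
    exact hψ)
  have h3 : 0 < T3 ψ ↔ _ := conc_pos_iff _ (by
    simp only [Fintype.sum_prod_type] at hψ ⊢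
    rw [← hψ, Finset.sum_comm]
    exact Finset.sum_congr rfl fun i _ => Finset.sum_comm)
  have n1 : 0 ≤ T1 ψ := Real.sqrt_nonneg _
  have n2 : 0 ≤ T2 ψ := Real.sqrt_nonneg _
  have n3 : 0 ≤ T3 ψ := Real.sqrt_nonneg _
  have hV : 0 < V123 ψ ↔ 0 < T1 ψ ∧ 0 < T2 ψ ∧ 0 < T3 ψ := by
    constructor
    · intro hv
      refine ⟨n1.lt_of_ne' ?_, n2.lt_of_ne' ?_, n3.lt_of_ne' ?_⟩ <;>
      · intro h0
        rw [V123, h0] at hv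
        norm_num at hv
    · rintro ⟨p1, p2, p3⟩
      unfold V123
      positivity
  rw [hV, h1, h2, h3]
  refine and_congr (not_congr ?_) (and_congr (not_congr ?_) (not_congr ?_))
  · exact ⟨fun ⟨u, v, h⟩ => ⟨u, v, fun x => h x.1 x.2⟩,
      fun ⟨u, v, h⟩ => ⟨u, v, fun i j => h (i, j)⟩⟩
  · exact ⟨fun ⟨u, v, h⟩ => ⟨u, v, fun x => h x.2.1 (x.1, x.2.2)⟩,
      fun ⟨u, v, h⟩ => ⟨u, v, fun i j => h (j.1, i, j.2)⟩⟩
  · exact ⟨fun ⟨u, v, h⟩ => ⟨u, v, fun x => h x.2.2 (x.1, x.2.1)⟩,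
      fun ⟨u, v, h⟩ => ⟨u, v, fun i j => h (j.1, j.2, i)⟩⟩
end
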